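/- Let n_a, n_b ∈ ℤ_{>0} and n_k ∈ ℤ_{≥0}. Let f : ℝ^{n_a} × ℝ^{n_b} → ℝ be a forward input–output model and f_inv : ℝ^{n_a + 1} × ℝ^{n_b − 1} → ℝ an inverse model satisfying, for all Y₀ ∈ ℝ, all (Y₁,…,Y_{n_a}) ∈ ℝ^{n_a}, all u₀ ∈ ℝ and all (U₁,…,U_{n_b−1}) ∈ ℝ^{n_b−1}: f((Y₁,…,Y_{n_a}), (u₀, U₁,…,U_{n_b−1})) = Y₀ if and only if u₀ = f_inv((Y₀, Y₁,…,Y_{n_a}), (U₁,…,U_{n_b−1})). Let r : ℤ → ℝ be a reference, and let the feedforward input u_ff : ℤ → ℝ satisfy, for all k ≥ 0, the recursion u_ff(k) = f_inv((r(k+n_k+1), r(k+n_k), …, r(k+n_k−n_a+1)), (u_ff(k−1), …, u_ff(k−n_b+1))). Suppose ŷ : ℤ → ℝ satisfies the initial conditions ŷ(i) = r(i) for all i ∈ {n_k−n_a+1, …, n_k} and the forward model recursion ŷ(k) = f((ŷ(k−1), …, ŷ(k−n_a)), (u_ff(k−n_k−1), …, u_ff(k−n_k−n_b))) for all k ≥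 n_k+1. Then ŷ(k) = r(k) for all k ≥ n_k−n_a+1. -/

import Mathlib

/-!
The inverse model picks `u_ff` so that the reference itself satisfies the forward model recursion
driven by `u_ff`. That recursion determines its solution from `na` consecutive initial values, so
the model output, which starts on the reference, stays on it.
-/

section PastWindow

variable {α : Type*} {n : ℕ}

/-- The regressor `(x k, x (k - 1), …, x (k - n + 1))` of the `n` most recent values of a signal at
time `k`, the most recent one first. -/
def pastWindow (x : ℤ → α) (n : ℕ) (k : ℤ) : Fin n → α :=
  fun i => x (k - (i : ℕ))

theorem pastWindow_succ (x : ℤ → α) (n : ℕ) (k : ℤ) :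
    pastWindow x (n + 1) k = Fin.cons (x k) (pastWindow x n (k - 1)) := by
  funext i
  cases i using Fin.cases with
  | zero => simp [pastWindow]
  | succ i => simp [pastWindow, sub_sub, add_comm]

theorem pastWindow_congr {x y : ℤ → α} {k : ℤ} (h : ∀ j, k - n < j → j ≤ k → x j = y j) :
    pastWindow x n k = pastWindow y n k :=
  funext fun i => h _ (by have := i.isLt; lia) (by lia)

theorem eq_of_pastWindow_recursion {x y : ℤ → α} {m : ℤ} (F : ℤ → (Fin n → α) → α)
    (hx : ∀ k, m < k → x k = F k (pastWindow x n (k - 1)))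
    (hy : ∀ k, m < k → y k = F k (pastWindow y n (k - 1)))
    (hinit : ∀ k, m - n < k → k ≤ m → x k = y k) (k : ℤ) (hk : m - n < k) : x k = y k := by
  induction k using Int.strongRec (m := m + 1) with
  | lt k hkm => exact hinit k hk (by lia)
  | ge k hmk ih =>
    have hwindow : pastWindow x n (k - 1) = pastWindow y n (k - 1) :=
      pastWindow_congr fun j _ _ => ih j (by lia) (by lia)
    rw [hx k (by lia), hy k (by lia), hwindow]

end PastWindow

section InverseModel

variable {α β : Type*} {na nb : ℕ}

/-- `y` is an output of the input–output model `f` with input delay `nk` under the input `u`, from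
time `nk + 1` on. Earlier values of `y` are its initial conditions and are left free. -/
def IsModelOutput (f : (Fin na → α) → (Fin nb → β) → α) (nk : ℤ) (u : ℤ → β) (y : ℤ → α) : Prop :=
  ∀ k, nk + 1 ≤ k → y k = f (pastWindow y na (k - 1)) (pastWindow u nb (k - nk - 1))

/-- `g` solves the model equation for its most recent input: feeding `g (Y₀, Y) U` to `f` produces
the output `Y₀`. The solution is not required to be unique. Here `nb` counts the past inputs, so
that `f` has input order `nb + 1`. -/
def IsRightInverseModel (f : (Fin na → α) → (Fin (nb + 1) → β) → α)
    (g : (Fin (na + 1) → α) → (Fin nb → β) → β) : Prop :=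
  ∀ Y₀ Y U, f Y (Fin.cons (g (Fin.cons Y₀ Y) U) U) = Y₀

/-- From time `0` on, `u` is generated by the inverse model `g` with the reference `r` in place of
the outputs, looking `nk + 1` steps ahead to compensate for the input delay. -/
def IsInverseFeedforward (g : (Fin (na + 1) → α) → (Fin nb → β) → β) (nk : ℤ) (r : ℤ → α)
    (u : ℤ → β) : Prop :=
  ∀ k, 0 ≤ k → u k = g (pastWindow r (na + 1) (k + nk + 1)) (pastWindow u nb (k - 1))

theorem IsModelOutput.eq_of_initial_eq {f : (Fin na → α) → (Fin nb → β) → α} {nk : ℤ} {u : ℤ → β}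
    {y z : ℤ → α} (hy : IsModelOutput f nk u y) (hz : IsModelOutput f nk u z)
    (hinit : ∀ i, nk - na + 1 ≤ i → i ≤ nk → y i = z i) (k : ℤ) (hk : nk - na + 1 ≤ k) :
    y k = z k :=
  eq_of_pastWindow_recursion (fun k Y => f Y (pastWindow u nb (k - nk - 1))) hy hz
    (fun i hi => hinit i (by lia)) k (by lia)

theorem IsInverseFeedforward.isModelOutput {f : (Fin na → α) → (Fin (nb + 1) → β) → α}
    {g : (Fin (na + 1) → α) → (Fin nb → β) → β} {nk : ℤ} {r : ℤ → α} {u : ℤ → β}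
    (hu : IsInverseFeedforward g nk r u) (hfg : IsRightInverseModel f g) :
    IsModelOutput f nk u r := by
  intro k hk
  have hinput : u (k - nk - 1) =
      g (Fin.cons (r k) (pastWindow r na (k - 1))) (pastWindow u nb (k - nk - 1 - 1)) := by
    have htime : k - nk - 1 + nk + 1 = k := by ring
    rw [hu (k - nk - 1) (by lia), htime, pastWindow_succ]
  rw [pastWindow_succ u, hinput, hfg]

theorem inverse_model_feedforward_exact_tracking_general
    {f : (Fin na → α) → (Fin (nb + 1) → β) → α} {g : (Fin (na + 1) → α) → (Fin nb → β) → β}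
    {nk : ℤ} {r y : ℤ → α} {u : ℤ → β} (hfg : IsRightInverseModel f g)
    (hu : IsInverseFeedforward g nk r u) (hinit : ∀ i, nk - na + 1 ≤ i → i ≤ nk → y i = r i)
    (hy : IsModelOutput f nk u y) (k : ℤ) (hk : nk - na + 1 ≤ k) : y k = r k :=
  hy.eq_of_initial_eq (hu.isModelOutput hfg) hinit k hk

end InverseModel

/-- Inverse model-based feedforward achieves exact tracking of the reference by the model
output. `f` is the forward input–output model, `f_inv` the (unique) inverse relation solving
for the most recent input, `r` the reference, `u_ff` the feedforward input generated by the
inverse model-based controller, and `ŷ` the model output under `u_ff` with matching initial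
conditions. -/
theorem inverse_model_feedforward_exact_tracking
    (na nb : ℕ) (hna : 0 < na) (hnb : 0 < nb) (nk : ℕ)
    (f : (Fin na → ℝ) → (Fin nb → ℝ) → ℝ)
    (f_inv : (Fin (na + 1) → ℝ) → (Fin (nb - 1) → ℝ) → ℝ)
    (hcast : nb = nb - 1 + 1)
    (hinv : ∀ (Y0 : ℝ) (Y : Fin na → ℝ) (u0 : ℝ) (U : Fin (nb - 1) → ℝ),
      f Y (Fin.cons u0 U ∘ Fin.cast hcast) = Y0 ↔ u0 = f_inv (Fin.cons Y0 Y) U)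
    (r u_ff yhat : ℤ → ℝ)
    (huff : ∀ k : ℤ, 0 ≤ k →
      u_ff k = f_inv (fun i : Fin (na + 1) => r (k + nk + 1 - (i : ℕ)))
                     (fun j : Fin (nb - 1) => u_ff (k - 1 - (j : ℕ))))
    (hinit : ∀ i : ℤ, (nk : ℤ) - na + 1 ≤ i → i ≤ (nk : ℤ) → yhat i = r i)
    (hfwd : ∀ k : ℤ, (nk : ℤ) + 1 ≤ k →
      yhat k = f (fun i : Fin na => yhat (k - 1 - (i : ℕ)))
                 (fun j : Fin nb => u_ff (k - nk - 1 - (j : ℕ)))) :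
    ∀ k : ℤ, (nk : ℤ) - na + 1 ≤ k → yhat k = r k := by
  obtain ⟨m, rfl⟩ : ∃ m, nb = m + 1 := ⟨nb - 1, hcast⟩
  exact inverse_model_feedforward_exact_tracking_general
    (fun Y₀ Y U => (hinv Y₀ Y _ U).2 rfl) huff hinit hfwd
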